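/- Let n and n^l both lie in ℤ₊^{m₁+1}(•) × ℤ₊^{m₂+1}(•), let A,B ∈ ℝ, and suppose G_{n,j} = A·A_{n,j} + B·A_{n^l,j} is not identically zero for some j ∈ {0,…,m₁}. If j ≤ l₁, then G_{n,j} has at most N_{1,j} zeros, counting multiplicities, on any real interval disjoint from Δ¹_{j+1} (Δ¹_{m₁+1} = ∅); if j > l₁, then G_{n,j} has at most N_{1,j} − 1 zeros, counting multiplicities, on any real interval disjoint from Δ¹_{j+1}. Here N_{1,j} = n_{1,j} + … + n_{1,m₁}. -/

import Mathlib

open MeasureTheory Polynomial Set Filter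

noncomputable section

/-- The support of a Borel measure on `ℝ`: points all of whose open neighborhoods
have positive measure. -/
def msupport (μ : Measure ℝ) : Set ℝ :=
  {x : ℝ | ∀ U : Set ℝ, IsOpen U → x ∈ U → μ U ≠ 0}

/-- The copy of a real set inside `ℂ`. -/
def cpx (s : Set ℝ) : Set ℂ := (fun x : ℝ => (x : ℂ)) '' s

/-- `nikhat μ e j g` is the Cauchy transform of the measure `⟨σ_j, …, σ_{j+g}⟩`,
where `σ_i = (e i) • (μ i)` is a measure of constant sign. -/
def nikhat (μ : ℕ → Measure ℝ) (e : ℕ → ℝ) : ℕ → ℕ → ℂ → ℂ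
  | j, 0, z => (e j : ℂ) * ∫ t, 1 / (z - (t : ℂ)) ∂(μ j)
  | j, g + 1, z => (e j : ℂ) * ∫ t, nikhat μ e (j + 1) g (t : ℂ) / (z - (t : ℂ)) ∂(μ j)

/-- The Cauchy transform `ŝ_{j+1,k}` of `s_{j+1,k} = ⟨σ_{j+1},…,σ_k⟩`, with the
convention that it is `≡ 1` when `k ≤ j`. -/
def wt (μ : ℕ → Measure ℝ) (e : ℕ → ℝ) (j k : ℕ) (z : ℂ) : ℂ :=
  if j < k then nikhat μ e (j + 1) (k - (j + 1)) z else 1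

/-- Integral of `f` against the measure `s_{j,k} = ⟨σ_j, …, σ_k⟩`
(whose density with respect to `σ_j` is `ŝ_{j+1,k}`). -/
def sInt (μ : ℕ → Measure ℝ) (e : ℕ → ℝ) (j k : ℕ) (f : ℝ → ℂ) : ℂ :=
  (e j : ℂ) * ∫ x, f x * wt μ e j k (x : ℂ) ∂(μ j)

/-- The linear form `𝒜_{n,j}(z) = ∑_{k=j}^{m₁} a_k(z) ŝ¹_{j+1,k}(z)`. -/
def linForm (μ : ℕ → Measure ℝ) (e : ℕ → ℝ) (m₁ j : ℕ) (A : ℕ → Polynomial ℝ)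
    (z : ℂ) : ℂ :=
  ∑ k ∈ Finset.Icc j m₁, Polynomial.aeval z (A k) * wt μ e j k z

/-- The linear forms with negative index:
`𝒜_{n,-j-1}(z) = ∫ 𝒜_{n,-j}(x) dσ²_j(x) / (z - x)`. -/
def linFormNeg (μ : ℕ → Measure ℝ) (e : ℕ → ℝ) (F : ℂ → ℂ) : ℕ → ℂ → ℂ
  | 0 => F
  | j + 1 => fun z => (e j : ℂ) * ∫ x, linFormNeg μ e F j (x : ℂ) / (z - (x : ℂ)) ∂(μ j)

/-- A Nikishin system `N(σ_0,…,σ_m)` of measures of constant sign `σ_j = (e j) • (μ j)`,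
with `Co(supp σ_j) = Δ_j = [a j, b j]` and `Δ_j ∩ Δ_{j+1} = ∅`. -/
structure NikSys (m : ℕ) where
  μ : ℕ → Measure ℝ
  e : ℕ → ℝ
  a : ℕ → ℝ
  b : ℕ → ℝ
  fin : ∀ j, IsFiniteMeasure (μ j)
  sgn : ∀ j, e j = 1 ∨ e j = -1
  hull : ∀ j ≤ m, convexHull ℝ (msupport (μ j)) = Set.Icc (a j) (b j)
  inf : ∀ j ≤ m, (msupport (μ j)).Infinite
  disj : ∀ j < m, Set.Icc (a j) (b j) ∩ Set.Icc (a (j + 1)) (b (j + 1)) = ∅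

/-- Decreasing multi-index (the class `ℤ₊^{m+1}(•)`). -/
def Decr (m : ℕ) (n : ℕ → ℕ) : Prop := ∀ j < m, n (j + 1) ≤ n j

/-- `|n| = n_0 + ⋯ + n_m`. -/
def msum (m : ℕ) (n : ℕ → ℕ) : ℕ := ∑ j ∈ Finset.range (m + 1), n j

/-- `N_{1,j} = n_j + ⋯ + n_m` (partial tail sums). -/
def tailSum (m : ℕ) (n : ℕ → ℕ) (j : ℕ) : ℕ := ∑ k ∈ Finset.Icc j m, n k

/-- Mixed type multiple orthogonal polynomials relative to `(n1;n2)` and `(S1,S2)`. -/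
def IsMOP (m₁ m₂ : ℕ) (S1 : NikSys m₁) (S2 : NikSys m₂)
    (n1 n2 : ℕ → ℕ) (A : ℕ → Polynomial ℝ) : Prop :=
  (∀ j ≤ m₁, (A j).degree < (n1 j : WithBot ℕ)) ∧
  (∃ j ≤ m₁, A j ≠ 0) ∧
  ∀ k ≤ m₂, ∀ ν < n2 k,
    sInt S2.μ S2.e 0 k (fun x => (x : ℂ) ^ ν * linForm S1.μ S1.e m₁ 0 A (x : ℂ)) = 0

/-- The "monic" normalization: the last entry different from zero has leading
coefficient `1`. -/
def MonicLast (m₁ : ℕ) (A : ℕ → Polynomial ℝ) : Prop :=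
  ∃ j ≤ m₁, (A j).Monic ∧ ∀ k, j < k → k ≤ m₁ → A k = 0

/-- `n^l`: increase the `l`-th component by one. -/
def bump (l : ℕ) (n : ℕ → ℕ) : ℕ → ℕ := fun j => if j = l then n j + 1 else n j


/-- `f` has at most `N` zeros, counting multiplicities, on `D ⊆ ℂ`
(multiplicities measured through vanishing of iterated derivatives). -/
def CZerosLE (f : ℂ → ℂ) (D : Set ℂ) (N : ℕ) : Prop :=
  ∀ (S : Finset ℂ) (ord : ℂ → ℕ), ↑S ⊆ D →
    (∀ x ∈ S, ∀ i < ord x, iteratedDeriv i f x = 0) → ∑ x ∈ S, ord x ≤ N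

/-- `f` has fewer than `N` zeros, counting multiplicities, on `D ⊆ ℂ`. -/
def CZerosLT (f : ℂ → ℂ) (D : Set ℂ) (N : ℕ) : Prop :=
  ∀ (S : Finset ℂ) (ord : ℂ → ℕ), ↑S ⊆ D →
    (∀ x ∈ S, ∀ i < ord x, iteratedDeriv i f x = 0) → ∑ x ∈ S, ord x < N

/-!
`𝒢_{n,j}` is again a linear form `∑_{k ≥ j} p_k ŝ_{j+1,k}`, now with `deg p_k < n^l_k`, so it is
enough to show that such a form, if its coefficients do not all vanish, has fewer than
`N_j = n_j + ⋯ + n_m` zeros off `Δ_{j+1}`, where `deg p_k < n_k` and `n_k ≤ n_j + 1` for `j < k`.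
This goes by downward induction on `j`. Off `Δ_{j+1}` the form is `p_j` plus the sum over `k > j` of
`p_k` times the Cauchy transform of `ŝ_{j+2,k} dσ_{j+1}`. Let `W` be a polynomial of degree at least
`N_j` whose zeros are zeros of the form, and let `L = ∑_{k > j} p_k ŝ_{j+2,k}`, which is the form
with index `j + 1`. For a polynomial `Q` with `deg Q < N_{j+1}`, the product of the form and `Q` is
`E(z) + ∫ Q L dσ_{j+1} / (z - t)` with a polynomial `E` of degree less than `deg Q + n_j`, and it
vanishes at the zeros of `W`. Hence `W` divides the difference of `E` and the polynomial of the
second kind of `W` relative to `(Q L / W) dσ_{j+1}`. Both have degree less than `deg W`, so they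
coincide, and comparing the coefficients of degree `deg W - 1` gives `∫ Q L / W dσ_{j+1} = 0`. So
`L` changes sign at least `N_{j+1}` times on `Δ_{j+1}`, against the induction hypothesis.
-/

section Zeros

theorem CZerosLT.mono {f : ℂ → ℂ} {D D' : Set ℂ} {N N' : ℕ} (h : CZerosLT f D' N')
    (hD : D ⊆ D') (hN : N' ≤ N) : CZerosLT f D N :=
  fun Z ord hZ hz => (h Z ord (hZ.trans hD) hz).trans_le hN

theorem CZerosLT.czerosLE {f : ℂ → ℂ} {D : Set ℂ} {N : ℕ} (h : CZerosLT f D (N + 1)) :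
    CZerosLE f D N :=
  fun Z ord hZ hz => Nat.lt_succ_iff.mp (h Z ord hZ hz)

theorem CZerosLT.encard_zeros_lt {f : ℂ → ℂ} {D : Set ℂ} {N : ℕ} (h : CZerosLT f D N) :
    {z ∈ D | f z = 0}.encard < N := by
  by_contra! hN
  obtain ⟨Z, hZ, hcard⟩ := Set.exists_subset_encard_eq hN
  have hfin : Z.Finite := Set.finite_of_encard_eq_coe hcard
  have hlt := h hfin.toFinset (fun _ => 1) (fun z hz => (hZ (by simpa using hz)).1)
    fun z hz i hi => by
      rw [Nat.lt_one_iff.mp hi, iteratedDeriv_zero]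
      exact (hZ (hfin.mem_toFinset.mp hz)).2
  rw [hfin.encard_eq_coe_toFinset_card, Nat.cast_inj] at hcard
  simp [hcard] at hlt

theorem czerosLT_cpx {f : ℂ → ℂ} {s : Set ℝ} {N : ℕ}
    (h : ∀ (Z : Finset ℝ) (ord : ℝ → ℕ), ↑Z ⊆ s →
      (∀ x ∈ Z, ∀ i < ord x, iteratedDeriv i f x = 0) → ∑ x ∈ Z, ord x < N) :
    CZerosLT f (cpx s) N := by
  intro Z ord hZ hz
  obtain ⟨Y, hY, rfl⟩ := Finset.subset_set_image_iff.mp hZ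
  rw [Finset.sum_image Complex.ofReal_injective.injOn]
  exact h Y (fun x => ord x) hY fun x hx => hz x (Finset.mem_image_of_mem _ hx)

/-- The monic polynomial with a zero of multiplicity `ord x` at each `x ∈ Z` and no others. -/
def zeroPoly (Z : Finset ℝ) (ord : ℝ → ℕ) : ℝ[X] := ∏ x ∈ Z, (X - C x) ^ ord x

theorem monic_zeroPoly (Z : Finset ℝ) (ord : ℝ → ℕ) : (zeroPoly Z ord).Monic :=
  monic_prod_of_monic _ _ fun x _ => (monic_X_sub_C x).pow _

theorem natDegree_zeroPoly (Z : Finset ℝ) (ord : ℝ → ℕ) :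
    (zeroPoly Z ord).natDegree = ∑ x ∈ Z, ord x := by
  rw [zeroPoly, natDegree_prod_of_monic _ _ fun x _ => (monic_X_sub_C x).pow _]
  simp

theorem eval_zeroPoly_ne_zero {Z : Finset ℝ} (ord : ℝ → ℕ) {t : ℝ} (ht : t ∉ Z) :
    (zeroPoly Z ord).eval t ≠ 0 := by
  rw [zeroPoly, eval_prod, Finset.prod_ne_zero_iff]
  intro x hx
  rw [eval_pow, eval_sub, eval_X, eval_C]
  exact pow_ne_zero _ (sub_ne_zero.mpr fun h => ht (h ▸ hx))

theorem zeroPoly_dvd {Z : Finset ℝ} {ord : ℝ → ℕ} {p : ℝ[X]}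
    (h : ∀ x ∈ Z, (X - C x) ^ ord x ∣ p) : zeroPoly Z ord ∣ p :=
  Finset.prod_dvd_of_coprime
    (fun _ _ _ _ hxy => (pairwise_coprime_X_sub_C Function.injective_id hxy).pow) h

theorem analyticOrderAt_aeval {K 𝕜 : Type*} [Field K] [NontriviallyNormedField 𝕜] [Algebra K 𝕜]
    {p : K[X]} (hp : p ≠ 0) (x : K) :
    analyticOrderAt (fun z : 𝕜 => aeval z p) (algebraMap K 𝕜 x) = p.rootMultiplicity x := by
  obtain ⟨q, hpq, hq⟩ := exists_eq_pow_rootMultiplicity_mul_and_not_dvd p hp x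
  have hqx : aeval (algebraMap K 𝕜 x) q ≠ 0 := by
    rw [aeval_algebraMap_apply_eq_algebraMap_eval]
    simpa [dvd_iff_isRoot] using hq
  refine (analyticAt_id.aeval_polynomial p).analyticOrderAt_eq_natCast.mpr
    ⟨fun z => aeval z q, analyticAt_id.aeval_polynomial q, hqx, Eventually.of_forall fun z => ?_⟩
  conv_lhs => rw [hpq]
  simp

theorem zeroPoly_dvd_of_le_analyticOrderAt {Z : Finset ℝ} {ord : ℝ → ℕ} {p : ℝ[X]}
    (h : ∀ x ∈ Z, (ord x : ℕ∞) ≤ analyticOrderAt (fun z : ℂ => aeval z p) (x : ℂ)) :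
    zeroPoly Z ord ∣ p := by
  rcases eq_or_ne p 0 with rfl | hp
  · exact dvd_zero _
  refine zeroPoly_dvd fun x hx => (le_rootMultiplicity_iff hp).mp ?_
  exact_mod_cast (h x hx).trans_eq (analyticOrderAt_aeval hp x)

theorem le_analyticOrderAt_zeroPoly {Z : Finset ℝ} (ord : ℝ → ℕ) {x : ℝ} (hx : x ∈ Z) :
    (ord x : ℕ∞) ≤ analyticOrderAt (fun z : ℂ => aeval z (zeroPoly Z ord)) (x : ℂ) := by
  have hne : zeroPoly Z ord ≠ 0 := (monic_zeroPoly Z ord).ne_zero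
  refine le_of_le_of_eq ?_ (analyticOrderAt_aeval hne x).symm
  exact_mod_cast (le_rootMultiplicity_iff hne).mpr (Finset.dvd_prod_of_mem _ hx)

theorem czerosLT_aeval {p : ℝ[X]} (hp : p ≠ 0) (s : Set ℝ) {N : ℕ} (hN : p.degree < N) :
    CZerosLT (fun z => aeval z p) (cpx s) N := by
  refine czerosLT_cpx fun Z ord _ hz => ?_
  have hdvd : zeroPoly Z ord ∣ p := zeroPoly_dvd_of_le_analyticOrderAt fun x hx =>
    (natCast_le_analyticOrderAt_iff_iteratedDeriv_eq_zero
      (analyticAt_id.aeval_polynomial p)).mpr (hz x hx)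
  calc ∑ x ∈ Z, ord x = (zeroPoly Z ord).natDegree := (natDegree_zeroPoly Z ord).symm
    _ ≤ p.natDegree := natDegree_le_of_dvd hdvd hp
    _ < N := (natDegree_lt_iff_degree_lt hp).mpr hN

end Zeros

section SignChanges

theorem exists_mem_Ioo_eq_zero {f : ℝ → ℝ} {x y : ℝ} (hxy : x < y)
    (hf : ContinuousOn f (Icc x y)) (hneg : f x * f y < 0) : ∃ s ∈ Ioo x y, f s = 0 := by
  have hzero : (0 : ℝ) ∈ uIcc (f x) (f y) := by
    rw [mem_uIcc]
    rcases mul_neg_iff.mp hneg with h | h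
    · exact Or.inr ⟨h.2.le, h.1.le⟩
    · exact Or.inl ⟨h.1.le, h.2.le⟩
  rw [← uIcc_of_le hxy.le] at hf
  obtain ⟨s, hs, hfs⟩ := intermediate_value_uIcc hf hzero
  rw [uIcc_of_le hxy.le] at hs
  refine ⟨s, ⟨hs.1.lt_of_ne ?_, hs.2.lt_of_ne ?_⟩, hfs⟩ <;> rintro rfl <;> simp [hfs] at hneg

theorem forall_nonneg_or_forall_nonpos {I : Set ℝ} {f : ℝ → ℝ}
    (hf : ∀ x ∈ I, ∀ y ∈ I, x < y → 0 ≤ f x * f y) :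
    (∀ x ∈ I, 0 ≤ f x) ∨ ∀ x ∈ I, f x ≤ 0 := by
  by_contra! h
  obtain ⟨⟨x, hx, hfx⟩, y, hy, hfy⟩ := h
  have hneg : f x * f y < 0 := mul_neg_of_neg_of_pos hfx hfy
  rcases lt_trichotomy x y with hxy | rfl | hxy
  · exact hneg.not_ge (hf x hx y hy hxy)
  · exact hfx.not_gt hfy
  · exact hneg.not_ge (mul_comm (f y) (f x) ▸ hf y hy x hx hxy)

/-- `f` changes sign on `I` only at points of `S`: between two points of `I` where it takes values
of opposite strict signs there is a point of `S`. -/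
def SignChangesIn (f : ℝ → ℝ) (I S : Set ℝ) : Prop :=
  ∀ x ∈ I, ∀ y ∈ I, x < y → f x * f y < 0 → (S ∩ Ioo x y).Nonempty

theorem SignChangesIn.mul_nonneg_of_forall_le {f : ℝ → ℝ} {I S : Set ℝ}
    (hf : SignChangesIn f I S) {x y : ℝ} (hx : x ∈ I) (hy : y ∈ I) (hxy : x < y)
    (hS : ∀ s ∈ S, s ≤ x) : 0 ≤ f x * f y :=
  not_lt.mp fun hneg =>
    let ⟨s, hs, hxs, _⟩ := hf x hx y hy hxy hneg
    (hS s hs).not_gt hxs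

/-- The last conjunct carries the induction on the largest point of `S`: past the points added
before, `Q` keeps its sign, so one more factor corrects the next sign change of `Q f`. -/
theorem SignChangesIn.exists_polynomial {S : Finset ℝ} : ∀ {f : ℝ → ℝ} {I : Set ℝ},
    SignChangesIn f I S → ∃ Q : ℝ[X], Q.natDegree ≤ S.card ∧ (∀ x ∈ I, 0 ≤ Q.eval x * f x) ∧
      ∀ x y, (∀ s ∈ S, s < x) → (∀ s ∈ S, s < y) → 0 < Q.eval x * Q.eval y := by
  induction S using Finset.induction_on_max with
  | empty =>
    intro f I hf
    have hconst : ∀ x ∈ I, ∀ y ∈ I, x < y → 0 ≤ f x * f y := fun x hx y hy hxy =>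
      hf.mul_nonneg_of_forall_le hx hy hxy (by simp)
    rcases forall_nonneg_or_forall_nonpos hconst with h | h
    · exact ⟨1, by simp, by simpa using h, by simp⟩
    · exact ⟨-1, by simp, by simpa using h, by simp⟩
  | insert s S hmax ih =>
    intro f I hf
    have hs : s ∉ S := fun h => (hmax s h).false
    have hleft : SignChangesIn f (I ∩ Iic s) S := fun x hx y hy hxy hneg => by
      obtain ⟨r, hr, hxr, hry⟩ := hf x hx.1 y hy.1 hxy hneg
      rw [Finset.mem_coe, Finset.mem_insert] at hr
      exact ⟨r, hr.resolve_left (hry.trans_le hy.2).ne, hxr, hry⟩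
    obtain ⟨Q, hdeg, hQf, hQ⟩ := ih hleft
    have hright : ∀ x ∈ I ∩ Ioi s, ∀ y ∈ I ∩ Ioi s, x < y →
        0 ≤ Q.eval x * f x * (Q.eval y * f y) := fun x hx y hy hxy => by
      have hfxy : 0 ≤ f x * f y := hf.mul_nonneg_of_forall_le hx.1 hy.1 hxy
        ((Finset.forall_mem_insert _ _ _).mpr ⟨hx.2.le, fun r hr => ((hmax r hr).trans hx.2).le⟩)
      have hQxy := hQ x y (fun r hr => (hmax r hr).trans hx.2) fun r hr => (hmax r hr).trans hy.2
      nlinarith [mul_nonneg hfxy hQxy.le]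
    simp only [Finset.card_insert_of_notMem hs, Finset.forall_mem_insert]
    rcases forall_nonneg_or_forall_nonpos hright with h | h
    · refine ⟨Q, hdeg.trans (Nat.le_succ _), fun x hx => ?_, fun x y hx hy => hQ x y hx.2 hy.2⟩
      exact (le_or_gt x s).elim (fun hxs => hQf x ⟨hx, hxs⟩) fun hxs => h x ⟨hx, hxs⟩
    · refine ⟨Q * (C s - X), ?_, fun x hx => ?_, fun x y hx hy => ?_⟩
      · exact natDegree_mul_le.trans (add_le_add hdeg (by compute_degree))
      · have : 0 ≤ (s - x) * (Q.eval x * f x) := (le_or_gt x s).elim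
          (fun hxs => mul_nonneg (sub_nonneg.mpr hxs) (hQf x ⟨hx, hxs⟩))
          fun hxs => mul_nonneg_of_nonpos_of_nonpos (sub_neg.mpr hxs).le (h x ⟨hx, hxs⟩)
        simpa [mul_assoc, mul_left_comm] using this
      · have := mul_pos (hQ x y hx.2 hy.2) (mul_pos (sub_pos.mpr hx.1) (sub_pos.mpr hy.1))
        simp only [eval_mul, eval_sub, eval_C, eval_X]
        linarith

theorem exists_polynomial_mul_nonneg {f : ℝ → ℝ} {I : Set ℝ} [I.OrdConnected]
    (hf : ContinuousOn f I) {Y : Finset ℝ} (hY : ∀ x ∈ I, f x = 0 → x ∈ Y) :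
    ∃ Q : ℝ[X], Q ≠ 0 ∧ Q.natDegree ≤ Y.card ∧ ∀ x ∈ I, 0 ≤ Q.eval x * f x := by
  have hsign : SignChangesIn f I Y := fun x hx y hy hxy hneg => by
    have hsub : Icc x y ⊆ I := Set.Icc_subset I hx hy
    obtain ⟨s, hs, hfs⟩ := exists_mem_Ioo_eq_zero hxy (hf.mono hsub) hneg
    exact ⟨s, hY s (hsub (Ioo_subset_Icc_self hs)) hfs, hs⟩
  obtain ⟨Q, hdeg, hQf, hpos⟩ := hsign.exists_polynomial
  obtain ⟨x, hx⟩ := ((eventually_all_finset Y).mpr fun s _ => eventually_gt_atTop s).exists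
  refine ⟨Q, ?_, hdeg, hQf⟩
  rintro rfl
  simpa using hpos x x hx hx

end SignChanges

section Support

theorem msupport_eq_support (μ : Measure ℝ) : msupport μ = μ.support := by
  ext x
  simp only [msupport, Measure.support_eq_forall_isOpen, pos_iff_ne_zero, mem_ofPred_eq]
  exact forall_congr' fun U => forall_comm

theorem integrable_of_continuousOn {μ : Measure ℝ} [IsFiniteMeasureOnCompacts μ] {K : Set ℝ}
    {E : Type*} [NormedAddCommGroup E] {g : ℝ → E}
    (hK : IsCompact K) (hμ : ∀ᵐ t ∂μ, t ∈ K) (hg : ContinuousOn g K) : Integrable g μ := by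
  rw [← Measure.restrict_eq_self_of_ae_mem hμ]
  exact hg.integrableOn_compact hK

theorem infinite_setOf_eq_zero {μ : Measure ℝ} [IsFiniteMeasureOnCompacts μ] {K : Set ℝ}
    (hinf : μ.support.Infinite) (hK : IsCompact K) (hμ : ∀ᵐ t ∂μ, t ∈ K) {g : ℝ → ℝ}
    (hg : ContinuousOn g K) (hnonneg : ∀ t ∈ K, 0 ≤ g t) (hint : ∫ t, g t ∂μ = 0) :
    {t ∈ K | g t = 0}.Infinite := by
  refine hinf.mono (Measure.support_subset_of_isClosed ?_ ?_)
  · exact hg.preimage_isClosed_of_isClosed hK.isClosed isClosed_singleton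
  · have hzero := (integral_eq_zero_iff_of_nonneg_ae (hμ.mono hnonneg)
      (integrable_of_continuousOn hK hμ hg)).mp hint
    exact hμ.and hzero

end Support

section CauchyTransform

variable {μ : Measure ℝ} {K : Set ℝ} {h : ℝ → ℝ} {z : ℂ}

/-- The Cauchy transform `z ↦ ∫ h(t) dμ(t) / (z - t)` of the measure `h dμ`. -/
def cauchyTransform (μ : Measure ℝ) (h : ℝ → ℝ) (z : ℂ) : ℂ := ∫ t, (h t : ℂ) / (z - t) ∂μ

theorem ofReal_mem_cpx {s : Set ℝ} {x : ℝ} : (x : ℂ) ∈ cpx s ↔ x ∈ s :=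
  Complex.ofReal_injective.mem_set_image

theorem sub_ofReal_ne_zero (hz : z ∉ cpx K) {t : ℝ} (ht : t ∈ K) : z - t ≠ 0 :=
  sub_ne_zero.mpr fun h => hz (h ▸ mem_image_of_mem _ ht)

theorem isOpen_compl_cpx (hK : IsCompact K) : IsOpen (cpx K)ᶜ :=
  (hK.image Complex.continuous_ofReal).isClosed.isOpen_compl

theorem exists_forall_le_norm_sub (hK : IsCompact K) (hz : z ∉ cpx K) :
    ∃ ε > 0, ∀ w ∈ Metric.ball z ε, ∀ t ∈ K, ε ≤ ‖w - (t : ℂ)‖ := by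
  obtain ⟨δ, hδ, hball⟩ := Metric.isOpen_iff.mp (isOpen_compl_cpx hK) z hz
  refine ⟨δ / 2, half_pos hδ, fun w hw t ht => ?_⟩
  have htz : δ ≤ dist (t : ℂ) z := not_lt.mp fun hlt => hball hlt (mem_image_of_mem _ ht)
  rw [← dist_eq_norm]
  linarith [dist_triangle_left (t : ℂ) z w, Metric.mem_ball.mp hw]

theorem continuousOn_cauchyKernel (hh : ContinuousOn h K) (hz : z ∉ cpx K) :
    ContinuousOn (fun t : ℝ => (h t : ℂ) / (z - t)) K :=
  (Complex.continuous_ofReal.comp_continuousOn hh).div (by fun_prop)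
    fun _ ht => sub_ofReal_ne_zero hz ht

variable [IsFiniteMeasureOnCompacts μ] (hK : IsCompact K) (hμ : ∀ᵐ t ∂μ, t ∈ K)
include hK hμ

theorem integrable_cauchyKernel (hh : ContinuousOn h K) (hz : z ∉ cpx K) :
    Integrable (fun t : ℝ => (h t : ℂ) / (z - t)) μ :=
  integrable_of_continuousOn hK hμ (continuousOn_cauchyKernel hh hz)

theorem differentiableOn_cauchyTransform (hh : ContinuousOn h K) :
    DifferentiableOn ℂ (cauchyTransform μ h) (cpx K)ᶜ := by
  intro z hz
  obtain ⟨ε, hε, hdist⟩ := exists_forall_le_norm_sub hK hz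
  have hball : Metric.ball z ε ∈ nhds z := Metric.ball_mem_nhds z hε
  have hcont : ContinuousOn (fun t : ℝ => -(h t : ℂ) / (z - t) ^ 2) K :=
    (Complex.continuous_ofReal.comp_continuousOn hh).neg.div (by fun_prop)
      fun t ht => pow_ne_zero _ (sub_ofReal_ne_zero hz ht)
  have hderiv : ∀ t ∈ K, ∀ w ∈ Metric.ball z ε,
      HasDerivAt (fun w : ℂ => (h t : ℂ) / (w - t)) (-(h t : ℂ) / (w - t) ^ 2) w := by
    intro t ht w hw
    have hne : w - t ≠ 0 := norm_pos_iff.mp (hε.trans_le (hdist w hw t ht))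
    simpa [div_eq_mul_inv] using
      (((hasDerivAt_id' w).sub_const (t : ℂ)).fun_inv hne).const_mul (h t : ℂ)
  have hbound : ∀ t ∈ K, ∀ w ∈ Metric.ball z ε,
      ‖-(h t : ℂ) / (w - t) ^ 2‖ ≤ ‖h t‖ / ε ^ 2 := by
    intro t ht w hw
    rw [norm_div, norm_neg, norm_pow, Complex.norm_real]
    gcongr
    exact hdist w hw t ht
  refine (hasDerivAt_integral_of_dominated_loc_of_deriv_le
    (F := fun (w : ℂ) (t : ℝ) => (h t : ℂ) / (w - t)) hball
    (eventually_of_mem hball fun w hw => ?_) (integrable_cauchyKernel hK hμ hh hz)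
    (integrable_of_continuousOn hK hμ hcont).aestronglyMeasurable (hμ.mono hbound)
    (integrable_of_continuousOn hK hμ (hh.norm.div_const _))
    (hμ.mono hderiv)).2.differentiableAt.differentiableWithinAt
  refine (integrable_cauchyKernel hK hμ hh ?_).aestronglyMeasurable
  rintro ⟨t, ht, rfl⟩
  simpa using hε.trans_le (hdist _ hw t ht)

theorem analyticAt_cauchyTransform (hh : ContinuousOn h K) (hz : z ∉ cpx K) :
    AnalyticAt ℂ (cauchyTransform μ h) z :=
  (differentiableOn_cauchyTransform hK hμ hh).analyticAt ((isOpen_compl_cpx hK).mem_nhds hz)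

end CauchyTransform

section SecondKind

variable {μ : Measure ℝ} {K : Set ℝ} {h : ℝ → ℝ} {z : ℂ}

/-- The polynomial of the second kind `z ↦ ∫ (P(z) - P(t)) / (z - t) h(t) dμ(t)` associated with
`P`, given by its coefficients: the integrand is `h(t)` times the quotient of `P` by `X - t`. -/
def secondKind (μ : Measure ℝ) (h : ℝ → ℝ) (P : ℝ[X]) : ℝ[X] :=
  ∑ i ∈ Finset.range P.natDegree, monomial i (∫ t, (P /ₘ (X - C t)).coeff i * h t ∂μ)

theorem coeff_divByMonic_X_sub_C_eq_zero {P : ℝ[X]} {i : ℕ} (hi : P.natDegree ≤ i) (t : ℝ) :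
    (P /ₘ (X - C t)).coeff i = 0 := by
  rw [coeff_divByMonic_X_sub_C, Finset.Icc_eq_empty (by lia), Finset.sum_empty]

theorem coeff_secondKind (μ : Measure ℝ) (h : ℝ → ℝ) (P : ℝ[X]) (i : ℕ) :
    (secondKind μ h P).coeff i = ∫ t, (P /ₘ (X - C t)).coeff i * h t ∂μ := by
  simp only [secondKind, finsetSum_coeff, coeff_monomial, Finset.sum_ite_eq', Finset.mem_range,
    ite_eq_left_iff, not_lt]
  intro hi
  simp [coeff_divByMonic_X_sub_C_eq_zero hi]

theorem degree_secondKind_lt (μ : Measure ℝ) (h : ℝ → ℝ) (P : ℝ[X]) :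
    (secondKind μ h P).degree < P.natDegree := by
  refine (degree_lt_iff_coeff_zero _ _).mpr fun i hi => ?_
  simp [coeff_secondKind, coeff_divByMonic_X_sub_C_eq_zero hi]

theorem coeff_secondKind_of_natDegree_eq_succ (μ : Measure ℝ) (h : ℝ → ℝ) {P : ℝ[X]} {N : ℕ}
    (hP : P.natDegree = N + 1) : (secondKind μ h P).coeff N = P.leadingCoeff * ∫ t, h t ∂μ := by
  rw [coeff_secondKind, ← integral_const_mul]
  simp [coeff_divByMonic_X_sub_C, hP, leadingCoeff]

theorem aeval_divByMonic_X_sub_C (P : ℝ[X]) (t : ℝ) (hz : z ≠ t) :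
    aeval z (P /ₘ (X - C t)) = (aeval z P - P.eval t) / (z - t) := by
  rw [eq_div_iff (sub_ne_zero.mpr hz)]
  have hdiv := congrArg (aeval z) (X_sub_C_mul_divByMonic_eq_sub_modByMonic P t)
  rw [modByMonic_X_sub_C_eq_C_eval] at hdiv
  simpa [mul_comm] using hdiv

theorem aeval_divByMonic_X_sub_C_eq_sum (P : ℝ[X]) (t : ℝ) (z : ℂ) :
    aeval z (P /ₘ (X - C t)) =
      ∑ i ∈ Finset.range P.natDegree, ((P /ₘ (X - C t)).coeff i : ℂ) * z ^ i := by
  rcases Nat.eq_zero_or_pos P.natDegree with hP | hP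
  · have hdiv : P /ₘ (X - C t) = 0 :=
      Polynomial.ext fun i => coeff_divByMonic_X_sub_C_eq_zero (hP.trans_le i.zero_le) t
    simp [hP, hdiv]
  · rw [aeval_eq_sum_range' (n := P.natDegree)]
    · simp
    · rw [natDegree_divByMonic _ (monic_X_sub_C t)]
      simpa

theorem continuous_coeff_divByMonic_X_sub_C (P : ℝ[X]) (i : ℕ) :
    Continuous fun t : ℝ => (P /ₘ (X - C t)).coeff i := by
  simp only [coeff_divByMonic_X_sub_C]
  fun_prop

variable [IsFiniteMeasureOnCompacts μ] (hK : IsCompact K) (hμ : ∀ᵐ t ∂μ, t ∈ K)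
include hK hμ

theorem aeval_secondKind (hh : ContinuousOn h K) (hz : z ∉ cpx K) (P : ℝ[X]) :
    aeval z (secondKind μ h P) = ∫ t, (aeval z P - P.eval t) / (z - t) * h t ∂μ := by
  have hterm : ∀ i, Integrable (fun t : ℝ => ((P /ₘ (X - C t)).coeff i : ℂ) * z ^ i * h t) μ :=
    fun i => integrable_of_continuousOn hK hμ <|
      (((Complex.continuous_ofReal.comp (continuous_coeff_divByMonic_X_sub_C P i)).mul
        continuous_const).continuousOn).mul (Complex.continuous_ofReal.comp_continuousOn hh)
  calc aeval z (secondKind μ h P)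
      = ∑ i ∈ Finset.range P.natDegree,
          ∫ t, ((P /ₘ (X - C t)).coeff i : ℂ) * z ^ i * h t ∂μ := by
        simp only [secondKind, map_sum, aeval_monomial, Complex.coe_algebraMap,
          ← integral_complex_ofReal, ← integral_mul_const, Complex.ofReal_mul, mul_right_comm]
    _ = ∫ t, aeval z (P /ₘ (X - C t)) * h t ∂μ := by
        simp only [← integral_finsetSum _ fun i _ => hterm i, aeval_divByMonic_X_sub_C_eq_sum,
          Finset.sum_mul]
    _ = ∫ t, (aeval z P - P.eval t) / (z - t) * h t ∂μ :=
        integral_congr_ae <| hμ.mono fun t ht => by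
          simp only [aeval_divByMonic_X_sub_C P t (sub_ne_zero.mp (sub_ofReal_ne_zero hz ht))]

theorem aeval_mul_cauchyTransform (hh : ContinuousOn h K) (hz : z ∉ cpx K) (P : ℝ[X]) :
    aeval z P * cauchyTransform μ h z =
      aeval z (secondKind μ h P) + cauchyTransform μ (fun t => P.eval t * h t) z := by
  have hPh : Integrable (fun t : ℝ => ((P.eval t * h t : ℝ) : ℂ) / (z - t)) μ :=
    integrable_cauchyKernel hK hμ (P.continuousOn.mul hh) hz
  have hzh := (integrable_cauchyKernel hK hμ hh hz).const_mul (aeval z P)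
  rw [← sub_eq_iff_eq_add, aeval_secondKind hK hμ hh hz, cauchyTransform, cauchyTransform,
    ← integral_const_mul, ← integral_sub hzh hPh]
  refine integral_congr_ae (Eventually.of_forall fun t => ?_)
  push_cast
  ring

end SecondKind

section Orthogonality

variable {μ : Measure ℝ} {K : Set ℝ} [IsFiniteMeasureOnCompacts μ] (hK : IsCompact K)
  (hμ : ∀ᵐ t ∂μ, t ∈ K)
include hK hμ

theorem zeroPoly_dvd_sub_secondKind {f : ℝ → ℝ} (hf : ContinuousOn f K) {E : ℝ[X]}
    {Z : Finset ℝ} {ord : ℝ → ℕ} (hZ : ∀ x ∈ Z, x ∉ K)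
    (hord : ∀ x ∈ Z, (ord x : ℕ∞) ≤ analyticOrderAt (fun z : ℂ => aeval z E +
      cauchyTransform μ (fun t => (zeroPoly Z ord).eval t * f t) z) (x : ℂ)) :
    zeroPoly Z ord ∣ E - secondKind μ f (zeroPoly Z ord) := by
  set W := zeroPoly Z ord
  refine zeroPoly_dvd_of_le_analyticOrderAt fun x hx => ?_
  have hxK : (x : ℂ) ∉ cpx K := ofReal_mem_cpx.not.mpr (hZ x hx)
  have hfx := analyticAt_cauchyTransform hK hμ hf hxK
  have hWx : AnalyticAt ℂ (fun z : ℂ => aeval z W) x := analyticAt_id.aeval_polynomial W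
  have hremainder : (fun z : ℂ => aeval z (E - secondKind μ f W)) =ᶠ[nhds (x : ℂ)]
      (fun z => aeval z E + cauchyTransform μ (fun t => W.eval t * f t) z) -
        fun z => aeval z W * cauchyTransform μ f z := by
    filter_upwards [(isOpen_compl_cpx hK).mem_nhds hxK] with z hz
    simp only [Pi.sub_apply, aeval_mul_cauchyTransform hK hμ hf hz, map_sub]
    ring
  rw [analyticOrderAt_congr hremainder]
  refine (le_min (hord x hx) ?_).trans le_analyticOrderAt_sub
  exact (le_analyticOrderAt_zeroPoly ord hx).trans
    (le_self_add.trans_eq (analyticOrderAt_mul hWx hfx).symm)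

theorem integral_eq_zero_of_le_analyticOrderAt {f : ℝ → ℝ} (hf : ContinuousOn f K) {E : ℝ[X]}
    {N : ℕ} (hE : E.degree < N) {Z : Finset ℝ} {ord : ℝ → ℕ} (hZ : ∀ x ∈ Z, x ∉ K)
    (hsum : N < ∑ x ∈ Z, ord x)
    (hord : ∀ x ∈ Z, (ord x : ℕ∞) ≤ analyticOrderAt (fun z : ℂ => aeval z E +
      cauchyTransform μ (fun t => (zeroPoly Z ord).eval t * f t) z) (x : ℂ)) :
    ∫ t, f t ∂μ = 0 := by
  have hdvd := zeroPoly_dvd_sub_secondKind hK hμ hf hZ hord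
  have hmonic := monic_zeroPoly Z ord
  rw [← natDegree_zeroPoly] at hsum
  set W := zeroPoly Z ord
  have hdeg : (E - secondKind μ f W).degree < W.degree := by
    rw [degree_eq_natDegree hmonic.ne_zero]
    exact (degree_sub_le _ _).trans_lt
      (max_lt (hE.trans (by exact_mod_cast hsum)) (degree_secondKind_lt μ f W))
  have hEq : E = secondKind μ f W := sub_eq_zero.mp (eq_zero_of_dvd_of_degree_lt hdvd hdeg)
  have hW : W.natDegree = (W.natDegree - 1) + 1 := by lia
  calc ∫ t, f t ∂μ = (secondKind μ f W).coeff (W.natDegree - 1) := by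
        rw [coeff_secondKind_of_natDegree_eq_succ μ f hW, hmonic.leadingCoeff, one_mul]
    _ = 0 := hEq ▸ coeff_eq_zero_of_degree_lt (hE.trans_le (by exact_mod_cast (by lia)))

theorem aeval_mul_add_sum_cauchyTransform {ι : Type*} (s : Finset ι) {w : ι → ℝ → ℝ}
    (hw : ∀ k ∈ s, ContinuousOn (w k) K) (Q p₀ : ℝ[X]) (p : ι → ℝ[X]) {z : ℂ}
    (hz : z ∉ cpx K) :
    aeval z Q * (aeval z p₀ + ∑ k ∈ s, aeval z (p k) * cauchyTransform μ (w k) z) =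
      aeval z (Q * p₀ + ∑ k ∈ s, secondKind μ (w k) (Q * p k)) +
        cauchyTransform μ (fun t => Q.eval t * ∑ k ∈ s, (p k).eval t * w k t) z := by
  have hsum : cauchyTransform μ (fun t => Q.eval t * ∑ k ∈ s, (p k).eval t * w k t) z =
      ∑ k ∈ s, cauchyTransform μ (fun t => (Q * p k).eval t * w k t) z := by
    have hint : ∀ k ∈ s,
        Integrable (fun t : ℝ => (((Q * p k).eval t * w k t : ℝ) : ℂ) / (z - t)) μ := fun k hk =>
      integrable_cauchyKernel hK hμ ((Q * p k).continuousOn.mul (hw k hk)) hz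
    simp only [cauchyTransform]
    rw [← integral_finsetSum s hint]
    simp only [Finset.mul_sum, eval_mul, mul_assoc, Complex.ofReal_sum, Finset.sum_div]
  rw [hsum, map_add, map_mul, map_sum, mul_add, Finset.mul_sum, add_assoc,
    ← Finset.sum_add_distrib]
  refine congrArg _ (Finset.sum_congr rfl fun k hk => ?_)
  rw [← aeval_mul_cauchyTransform hK hμ (hw k hk) hz, map_mul, mul_assoc]

end Orthogonality

section ZeroBound

variable {ι : Type*}

theorem degree_mul_add_sum_secondKind_lt (μ : Measure ℝ) (s : Finset ι) (w : ι → ℝ → ℝ)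
    (Q : ℝ[X]) {p₀ : ℝ[X]} {p : ι → ℝ[X]} {n : ℕ} (hp₀ : p₀.degree < n)
    (hp : ∀ k ∈ s, (p k).natDegree ≤ n) :
    (Q * p₀ + ∑ k ∈ s, secondKind μ (w k) (Q * p k)).degree < (Q.natDegree + n : ℕ) := by
  refine (degree_add_le _ _).trans_lt (max_lt ?_ ?_)
  · rcases eq_or_ne p₀ 0 with rfl | hne
    · simp
    · refine degree_le_natDegree.trans_lt ?_
      have := (natDegree_lt_iff_degree_lt hne).mpr hp₀
      exact_mod_cast natDegree_mul_le.trans_lt (Nat.add_lt_add_left this _)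
  · refine (degree_sum_le _ _).trans_lt ((Finset.sup_lt_iff (WithBot.bot_lt_coe _)).mpr ?_)
    intro k hk
    refine (degree_secondKind_lt μ (w k) _).trans_le ?_
    exact_mod_cast natDegree_mul_le.trans (Nat.add_le_add_left (hp k hk) _)

variable {μ : Measure ℝ} {K : Set ℝ} [IsFiniteMeasureOnCompacts μ] (hK : IsCompact K)
  (hμ : ∀ᵐ t ∂μ, t ∈ K)
include hK hμ

theorem exists_polynomial_integral_mul_ne_zero [K.OrdConnected] (hinf : μ.support.Infinite)
    {f : ℝ → ℝ} (hf : ContinuousOn f K) {N : ℕ} (hN : {t ∈ K | f t = 0}.encard < N) :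
    ∃ Q : ℝ[X], Q.natDegree < N ∧ ∫ t, Q.eval t * f t ∂μ ≠ 0 := by
  have hfin : {t ∈ K | f t = 0}.Finite := finite_of_encard_le_coe hN.le
  obtain ⟨Q, hQ, hdeg, hnonneg⟩ := exists_polynomial_mul_nonneg hf (Y := hfin.toFinset)
    fun x hx hfx => hfin.mem_toFinset.mpr ⟨hx, hfx⟩
  rw [hfin.encard_eq_coe_toFinset_card, Nat.cast_lt] at hN
  refine ⟨Q, hdeg.trans_lt hN, fun hint => ?_⟩
  refine infinite_setOf_eq_zero hinf hK hμ (Q.continuousOn.mul hf) hnonneg hint ?_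
  refine (Q.roots.toFinset.finite_toSet.union hfin).subset fun t ht => ?_
  rcases mul_eq_zero.mp ht.2 with h | h
  · exact Or.inl (by simpa [hQ] using h)
  · exact Or.inr ⟨ht.1, h⟩

theorem analyticAt_aeval_add_sum_cauchyTransform (s : Finset ι) {w : ι → ℝ → ℝ}
    (hw : ∀ k ∈ s, ContinuousOn (w k) K) (p₀ : ℝ[X]) (p : ι → ℝ[X]) {z : ℂ} (hz : z ∉ cpx K) :
    AnalyticAt ℂ (fun z => aeval z p₀ + ∑ k ∈ s, aeval z (p k) * cauchyTransform μ (w k) z) z :=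
  (analyticAt_id.aeval_polynomial p₀).add <| s.analyticAt_fun_sum fun k hk =>
    (analyticAt_id.aeval_polynomial (p k)).mul (analyticAt_cauchyTransform hK hμ (hw k hk) hz)

theorem integral_mul_div_zeroPoly_eq_zero (s : Finset ι) {w : ι → ℝ → ℝ}
    (hw : ∀ k ∈ s, ContinuousOn (w k) K) {Q p₀ : ℝ[X]} {p : ι → ℝ[X]} {n : ℕ}
    (hp₀ : p₀.degree < n) (hp : ∀ k ∈ s, (p k).natDegree ≤ n) {Z : Finset ℝ} {ord : ℝ → ℕ}
    (hZ : ∀ x ∈ Z, x ∉ K) (hsum : Q.natDegree + n < ∑ x ∈ Z, ord x)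
    (hzero : ∀ x ∈ Z, ∀ i < ord x, iteratedDeriv i
      (fun z => aeval z p₀ + ∑ k ∈ s, aeval z (p k) * cauchyTransform μ (w k) z) (x : ℂ) = 0) :
    ∫ t, Q.eval t * ((∑ k ∈ s, (p k).eval t * w k t) / (zeroPoly Z ord).eval t) ∂μ = 0 := by
  set W := zeroPoly Z ord
  set f : ℝ → ℝ := fun t => (∑ k ∈ s, (p k).eval t * w k t) / W.eval t with hf_def
  have hW : ∀ t ∈ K, W.eval t ≠ 0 := fun t ht => eval_zeroPoly_ne_zero ord fun h => hZ t h ht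
  have hf : ContinuousOn f K :=
    (continuousOn_finsetSum s fun k hk => (p k).continuousOn.mul (hw k hk)).div W.continuousOn hW
  refine integral_eq_zero_of_le_analyticOrderAt hK hμ (Q.continuousOn.mul hf)
    (degree_mul_add_sum_secondKind_lt μ s w Q hp₀ hp) hZ hsum fun x hx => ?_
  have hxK : (x : ℂ) ∉ cpx K := ofReal_mem_cpx.not.mpr (hZ x hx)
  have hF := analyticAt_aeval_add_sum_cauchyTransform hK hμ s hw p₀ p hxK
  have hQ : AnalyticAt ℂ (fun z : ℂ => aeval z Q) x := analyticAt_id.aeval_polynomial Q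
  have hQF : (fun z => aeval z Q *
        (aeval z p₀ + ∑ k ∈ s, aeval z (p k) * cauchyTransform μ (w k) z)) =ᶠ[nhds (x : ℂ)]
      fun z => aeval z (Q * p₀ + ∑ k ∈ s, secondKind μ (w k) (Q * p k)) +
        cauchyTransform μ (fun t => W.eval t * (Q.eval t * f t)) z := by
    filter_upwards [(isOpen_compl_cpx hK).mem_nhds hxK] with z hz
    rw [aeval_mul_add_sum_cauchyTransform hK hμ s hw Q p₀ p hz]
    refine congrArg _ (integral_congr_ae (hμ.mono fun t ht => ?_))
    simp only [hf_def, mul_left_comm (W.eval t), mul_div_cancel₀ _ (hW t ht)]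
  refine le_of_le_of_eq ?_ (analyticOrderAt_congr hQF)
  calc (ord x : ℕ∞) ≤ _ :=
        (natCast_le_analyticOrderAt_iff_iteratedDeriv_eq_zero hF).mpr (hzero x hx)
    _ ≤ _ := le_add_self.trans_eq (analyticOrderAt_mul hQ hF).symm

theorem czerosLT_aeval_add_sum_cauchyTransform [K.OrdConnected] (hinf : μ.support.Infinite)
    (s : Finset ι) {w : ι → ℝ → ℝ} (hw : ∀ k ∈ s, ContinuousOn (w k) K) {p₀ : ℝ[X]} {p : ι → ℝ[X]}
    {n N : ℕ} (hp₀ : p₀.degree < n) (hp : ∀ k ∈ s, (p k).natDegree ≤ n)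
    (hN : {t ∈ K | ∑ k ∈ s, (p k).eval t * w k t = 0}.encard < N) :
    CZerosLT (fun z => aeval z p₀ + ∑ k ∈ s, aeval z (p k) * cauchyTransform μ (w k) z)
      (cpx Kᶜ) (n + N) := by
  refine czerosLT_cpx fun Z ord hZ hzero => ?_
  by_contra! hle
  have hW : ∀ t ∈ K, (zeroPoly Z ord).eval t ≠ 0 := fun t ht =>
    eval_zeroPoly_ne_zero ord fun h => hZ h ht
  have hf := (continuousOn_finsetSum s fun k hk => (p k).continuousOn.mul (hw k hk)).div
    (zeroPoly Z ord).continuousOn hW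
  obtain ⟨Q, hQN, hQ⟩ := exists_polynomial_integral_mul_ne_zero hK hμ hinf hf <| by
    refine (encard_le_encard ?_).trans_lt hN
    exact fun t ht => ⟨ht.1, (div_eq_zero_iff.mp ht.2).resolve_right (hW t ht.1)⟩
  exact hQ (integral_mul_div_zeroPoly_eq_zero hK hμ s hw hp₀ hp (fun x hx => hZ hx) (by lia) hzero)

end ZeroBound

section Nikishin

namespace NikSys

variable {m : ℕ} (S : NikSys m)

instance (j : ℕ) : IsFiniteMeasure (S.μ j) := S.fin j

theorem e_ne_zero (j : ℕ) : S.e j ≠ 0 := by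
  rcases S.sgn j with h | h <;> simp [h]

/-- The interval `Δ_j`, with the convention that it is empty for `j > m`. -/
def interval (j : ℕ) : Set ℝ := if j ≤ m then Icc (S.a j) (S.b j) else ∅

theorem interval_of_le {j : ℕ} (hj : j ≤ m) : S.interval j = Icc (S.a j) (S.b j) := if_pos hj

theorem interval_of_lt {j : ℕ} (hj : m < j) : S.interval j = ∅ := if_neg hj.not_ge

theorem isCompact_interval (j : ℕ) : IsCompact (S.interval j) := by
  unfold interval
  split_ifs
  exacts [isCompact_Icc, isCompact_empty]

instance ordConnected_interval (j : ℕ) : (S.interval j).OrdConnected := by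
  unfold interval
  split_ifs <;> infer_instance

theorem disjoint_interval {s : Set ℝ} {j : ℕ} (h : j ≤ m → s ∩ Icc (S.a j) (S.b j) = ∅) :
    Disjoint s (S.interval j) := by
  rw [disjoint_iff_inter_eq_empty]
  rcases le_or_gt j m with hj | hj
  · rw [S.interval_of_le hj, h hj]
  · rw [S.interval_of_lt hj, inter_empty]

theorem interval_subset_compl_interval_succ (j : ℕ) :
    S.interval j ⊆ (S.interval (j + 1))ᶜ :=
  (S.disjoint_interval fun hj => by
    rw [S.interval_of_le (Nat.le_of_lt hj), S.disj j hj]).subset_compl_right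

theorem infinite_support {j : ℕ} (hj : j ≤ m) : (S.μ j).support.Infinite :=
  msupport_eq_support (S.μ j) ▸ S.inf j hj

theorem ae_mem_interval {j : ℕ} (hj : j ≤ m) : ∀ᵐ t ∂(S.μ j), t ∈ S.interval j := by
  rw [S.interval_of_le hj, ← S.hull j hj]
  filter_upwards [Measure.support_mem_ae (μ := S.μ j)] with t ht
  exact subset_convexHull ℝ _ (msupport_eq_support (S.μ j) ▸ ht)

/-- The weight `ŝ_{j+1,k}` as a real function on `ℝ \ Δ_{j+1}`, with the convention that it is
`1` for `k ≤ j`. -/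
def weight (j k : ℕ) (t : ℝ) : ℝ := (wt S.μ S.e j k t).re

theorem wt_of_le {j k : ℕ} (h : k ≤ j) (z : ℂ) : wt S.μ S.e j k z = 1 := if_neg h.not_gt

theorem wt_of_lt {j k : ℕ} (h : j < k) (z : ℂ) :
    wt S.μ S.e j k z = S.e (j + 1) * ∫ t, wt S.μ S.e (j + 1) k t / (z - t) ∂(S.μ (j + 1)) := by
  obtain ⟨g, rfl⟩ := Nat.exists_eq_add_of_lt h
  cases g with
  | zero => simp [wt, nikhat]
  | succ g =>
    have h1 : j + (g + 1) + 1 - (j + 1) = g + 1 := by lia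
    have h2 : j + (g + 1) + 1 - (j + 1 + 1) = g := by lia
    have hlt : j + 1 < j + (g + 1) + 1 := by lia
    simp only [wt, if_pos h, if_pos hlt, h1, h2, nikhat]

theorem ofReal_weight (j k : ℕ) (t : ℝ) : (S.weight j k t : ℂ) = wt S.μ S.e j k t := by
  rcases le_or_gt k j with h | h
  · simp [weight, S.wt_of_le h]
  · have hreal : wt S.μ S.e j k t =
        (S.e (j + 1) * ∫ x, S.weight (j + 1) k x / (t - x) ∂(S.μ (j + 1)) : ℝ) := by
      rw [S.wt_of_lt h]
      push_cast [← integral_complex_ofReal, ofReal_weight (j + 1) k]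
      rfl
    rw [weight, hreal, Complex.ofReal_re]
termination_by k - j

theorem wt_eq_cauchyTransform {j k : ℕ} (h : j < k) (z : ℂ) :
    wt S.μ S.e j k z =
      cauchyTransform (S.μ (j + 1)) (fun t => S.e (j + 1) * S.weight (j + 1) k t) z := by
  simp only [S.wt_of_lt h, cauchyTransform, Complex.ofReal_mul, S.ofReal_weight,
    ← integral_const_mul, mul_div_assoc]

theorem continuousOn_weight (j : ℕ) {k : ℕ} (hk : k ≤ m) :
    ContinuousOn (S.weight j k) (S.interval (j + 1))ᶜ := by
  unfold weight
  rcases le_or_gt k j with h | h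
  · simp only [S.wt_of_le h]
    exact continuousOn_const
  · have hw : ContinuousOn (fun t => S.e (j + 1) * S.weight (j + 1) k t) (S.interval (j + 1)) :=
      continuousOn_const.mul <|
        (continuousOn_weight (j + 1) hk).mono (S.interval_subset_compl_interval_succ (j + 1))
    simp only [S.wt_eq_cauchyTransform h]
    refine Complex.continuous_re.comp_continuousOn <|
      (differentiableOn_cauchyTransform (S.isCompact_interval _)
        (S.ae_mem_interval (h.trans_le hk)) hw).continuousOn.comp
          Complex.continuous_ofReal.continuousOn fun t ht => ofReal_mem_cpx.not.mpr ht
termination_by k - j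

theorem linForm_ofReal (j : ℕ) (p : ℕ → ℝ[X]) (t : ℝ) :
    linForm S.μ S.e m j p t = (∑ k ∈ Finset.Icc j m, (p k).eval t * S.weight j k t : ℝ) := by
  have haeval : ∀ P : ℝ[X], aeval (t : ℂ) P = (P.eval t : ℝ) :=
    aeval_algebraMap_apply_eq_algebraMap_eval t
  simp [linForm, haeval, S.ofReal_weight]

theorem linForm_eq_aeval_add_sum_cauchyTransform {j : ℕ} (hj : j ≤ m) (p : ℕ → ℝ[X]) (z : ℂ) :
    linForm S.μ S.e m j p z = aeval z (p j) + ∑ k ∈ Finset.Icc (j + 1) m, aeval z (p k) *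
      cauchyTransform (S.μ (j + 1)) (fun t => S.e (j + 1) * S.weight (j + 1) k t) z := by
  rw [linForm, ← Finset.insert_Icc_add_one_left_eq_Icc hj, Finset.sum_insert (by simp),
    S.wt_of_le le_rfl, mul_one]
  refine congrArg _ (Finset.sum_congr rfl fun k hk => ?_)
  rw [S.wt_eq_cauchyTransform (Finset.mem_Icc.mp hk).1]

theorem czerosLT_linForm_of_encard_lt {j : ℕ} (hj : j < m) {p : ℕ → ℝ[X]} {n N : ℕ}
    (hpj : (p j).degree < n) (hp : ∀ k ∈ Finset.Icc (j + 1) m, (p k).natDegree ≤ n)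
    (hN : {z ∈ cpx (S.interval (j + 1)) | linForm S.μ S.e m (j + 1) p z = 0}.encard < N) :
    CZerosLT (linForm S.μ S.e m j p) (cpx (S.interval (j + 1))ᶜ) (n + N) := by
  rw [funext (S.linForm_eq_aeval_add_sum_cauchyTransform hj.le p)]
  refine czerosLT_aeval_add_sum_cauchyTransform (S.isCompact_interval _) (S.ae_mem_interval hj)
    (S.infinite_support hj) _ (fun k hk => ?_) hpj hp ?_
  · exact continuousOn_const.mul <| (S.continuousOn_weight (j + 1) (Finset.mem_Icc.mp hk).2).mono
      (S.interval_subset_compl_interval_succ (j + 1))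
  · rw [← Complex.ofReal_injective.encard_image]
    refine (encard_le_encard ?_).trans_lt hN
    rintro _ ⟨t, ⟨ht, hzero⟩, rfl⟩
    refine ⟨ofReal_mem_cpx.mpr ht, ?_⟩
    simp only [mul_left_comm _ (S.e (j + 1)), ← Finset.mul_sum] at hzero
    rw [S.linForm_ofReal, (mul_eq_zero.mp hzero).resolve_left (S.e_ne_zero _), Complex.ofReal_zero]

end NikSys

/-- A multi-index `(n_0, …, n_m)` with `n_k ≤ n_i + 1` whenever `i < k`: the condition under which
the zeros of the linear forms are counted, satisfied by decreasing multi-indices. -/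
def AlmostDecr (m : ℕ) (n : ℕ → ℕ) : Prop := ∀ i k, i < k → k ≤ m → n k ≤ n i + 1

theorem Decr.almostDecr {m : ℕ} {n : ℕ → ℕ} (h : Decr m n) : AlmostDecr m n := by
  intro i k hik hk
  induction k, hik using Nat.le_induction with
  | base => exact (h i hk).trans (Nat.le_succ _)
  | succ k _ ih => exact (h k hk).trans (ih (Nat.le_of_lt hk))

theorem tailSum_of_le {m j : ℕ} (n : ℕ → ℕ) (hj : j ≤ m) :
    tailSum m n j = n j + tailSum m n (j + 1) := by
  rw [tailSum, ← Finset.insert_Icc_add_one_left_eq_Icc hj, Finset.sum_insert (by simp), tailSum]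

theorem tailSum_bump_of_lt {l j : ℕ} (m : ℕ) (n : ℕ → ℕ) (h : l < j) :
    tailSum m (bump l n) j = tailSum m n j :=
  Finset.sum_congr rfl fun _ hk => if_neg (h.trans_le (Finset.mem_Icc.mp hk).1).ne'

theorem tailSum_bump_le (l m j : ℕ) (n : ℕ → ℕ) :
    tailSum m (bump l n) j ≤ tailSum m n j + 1 := by
  have hbump : ∀ k, bump l n k = n k + if k = l then 1 else 0 := fun k => by
    unfold bump
    split_ifs <;> rfl
  simp only [tailSum, hbump, Finset.sum_add_distrib, Finset.sum_ite_eq']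
  gcongr
  split_ifs <;> simp

theorem NikSys.czerosLT_linForm {m : ℕ} (S : NikSys m) {n : ℕ → ℕ} (hn : AlmostDecr m n)
    {p : ℕ → ℝ[X]} (hp : ∀ k ≤ m, (p k).degree < n k) {j : ℕ}
    (hne : ∃ k ∈ Finset.Icc j m, p k ≠ 0) :
    CZerosLT (linForm S.μ S.e m j p) (cpx (S.interval (j + 1))ᶜ) (tailSum m n j) := by
  obtain ⟨k₀, hk₀, hpk₀⟩ := hne
  have hj : j ≤ m := (Finset.mem_Icc.mp hk₀).1.trans (Finset.mem_Icc.mp hk₀).2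
  rw [tailSum_of_le n hj]
  by_cases hne' : ∃ k ∈ Finset.Icc (j + 1) m, p k ≠ 0
  · obtain ⟨k₁, hk₁, -⟩ := id hne'
    have hjm : j < m := (Finset.mem_Icc.mp hk₁).1.trans (Finset.mem_Icc.mp hk₁).2
    refine S.czerosLT_linForm_of_encard_lt hjm (hp j hj) (fun k hk => ?_)
      ((S.czerosLT_linForm hn hp hne').mono ?_ le_rfl).encard_zeros_lt
    · rw [Finset.mem_Icc] at hk
      refine natDegree_le_iff_coeff_eq_zero.mpr fun i hi => coeff_eq_zero_of_degree_lt ?_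
      exact (hp k hk.2).trans_le (by exact_mod_cast (hn j k hk.1 hk.2).trans hi)
    · exact image_mono (S.interval_subset_compl_interval_succ (j + 1))
  · push Not at hne'
    have hlin : linForm S.μ S.e m j p = fun z => aeval z (p j) := funext fun z => by
      rw [S.linForm_eq_aeval_add_sum_cauchyTransform hj, Finset.sum_eq_zero, add_zero]
      intro k hk
      rw [hne' k hk, map_zero, zero_mul]
    have hpj : p j ≠ 0 := by
      rcases (Finset.mem_Icc.mp hk₀).1.eq_or_lt with rfl | hlt
      · exact hpk₀
      · exact absurd (hne' k₀ (Finset.mem_Icc.mpr ⟨hlt, (Finset.mem_Icc.mp hk₀).2⟩)) hpk₀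
    rw [hlin]
    exact (czerosLT_aeval hpj _ (hp j hj)).mono subset_rfl (Nat.le_add_right _ _)
termination_by m - j

theorem linForm_combination (μ : ℕ → Measure ℝ) (e : ℕ → ℝ) (m j : ℕ) (A A' : ℕ → ℝ[X])
    (c d : ℝ) (z : ℂ) :
    (c : ℂ) * linForm μ e m j A z + (d : ℂ) * linForm μ e m j A' z =
      linForm μ e m j (fun k => c • A k + d • A' k) z := by
  simp [linForm, Finset.mul_sum, ← Finset.sum_add_distrib, add_mul, mul_assoc]

theorem le_bump (l : ℕ) (n : ℕ → ℕ) : n ≤ bump l n := fun k => by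
  unfold bump
  split_ifs <;> simp

theorem exists_ne_zero_of_linForm_ne_zero {μ : ℕ → Measure ℝ} {e : ℕ → ℝ} {m j : ℕ}
    {p : ℕ → ℝ[X]} {z : ℂ} (h : linForm μ e m j p z ≠ 0) : ∃ k ∈ Finset.Icc j m, p k ≠ 0 := by
  contrapose! h
  exact Finset.sum_eq_zero fun k hk => by rw [h k hk, map_zero, zero_mul]

theorem combination_zero_bound_general {m : ℕ} (S : NikSys m) {n : ℕ → ℕ} {l : ℕ}
    (hn : AlmostDecr m (bump l n)) {A A' : ℕ → ℝ[X]} (hA : ∀ k ≤ m, (A k).degree < bump l n k)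
    (hA' : ∀ k ≤ m, (A' k).degree < bump l n k) {c d : ℝ} {j : ℕ}
    (hne : ∃ k ∈ Finset.Icc j m, c • A k + d • A' k ≠ 0) {s : Set ℝ}
    (hs : Disjoint s (S.interval (j + 1))) :
    (j ≤ l → CZerosLE (fun z => (c : ℂ) * linForm S.μ S.e m j A z +
      (d : ℂ) * linForm S.μ S.e m j A' z) (cpx s) (tailSum m n j)) ∧
    (l < j → CZerosLT (fun z => (c : ℂ) * linForm S.μ S.e m j A z +
      (d : ℂ) * linForm S.μ S.e m j A' z) (cpx s) (tailSum m n j)) := by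
  have hdeg : ∀ k ≤ m, (c • A k + d • A' k).degree < bump l n k := fun k hk =>
    (degree_add_le _ _).trans_lt <| max_lt ((degree_smul_le _ _).trans_lt (hA k hk))
      ((degree_smul_le _ _).trans_lt (hA' k hk))
  have hzeros := (S.czerosLT_linForm hn hdeg hne).mono (image_mono hs.subset_compl_right) le_rfl
  simp only [linForm_combination]
  refine ⟨fun _ => (hzeros.mono subset_rfl (tailSum_bump_le l m j n)).czerosLE, fun hl => ?_⟩
  rwa [tailSum_bump_of_lt m n hl] at hzeros

end Nikishin

/-- Zero-count bounds for `𝒢_{n,j} = A·𝒜_{n,j} + B·𝒜_{n^l,j}` on real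
intervals disjoint from `Δ¹_{j+1}`: at most `N_{1,j}` zeros if `j ≤ l₁`, and at most
`N_{1,j} - 1` zeros if `j > l₁`, counting multiplicities. -/
theorem combination_zero_bound
    (m₁ m₂ : ℕ) (S1 : NikSys m₁) (S2 : NikSys m₂)
    (hbase : S1.μ 0 = S2.μ 0 ∧ S1.e 0 = S2.e 0)
    (n1 n2 : ℕ → ℕ) (l₁ l₂ : ℕ) (hl₁ : l₁ ≤ m₁) (hl₂ : l₂ ≤ m₂)
    (h1 : Decr m₁ n1) (h2 : Decr m₂ n2)
    (h1l : Decr m₁ (bump l₁ n1)) (h2l : Decr m₂ (bump l₂ n2))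
    (hsum : msum m₂ n2 + 1 = msum m₁ n1)
    (A A' : ℕ → Polynomial ℝ)
    (hA : IsMOP m₁ m₂ S1 S2 n1 n2 A) (hAm : MonicLast m₁ A)
    (hA' : IsMOP m₁ m₂ S1 S2 (bump l₁ n1) (bump l₂ n2) A') (hA'm : MonicLast m₁ A')
    (c d : ℝ) (j : ℕ) (hj : j ≤ m₁)
    (hne : ∃ z ∈ (if j < m₁ then (cpx (Set.Icc (S1.a (j+1)) (S1.b (j+1))))ᶜ
        else (Set.univ : Set ℂ)),
      (c : ℂ) * linForm S1.μ S1.e m₁ j A z +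
        (d : ℂ) * linForm S1.μ S1.e m₁ j A' z ≠ 0) :
    ∀ u v : ℝ, (j < m₁ →
        Set.Icc u v ∩ Set.Icc (S1.a (j+1)) (S1.b (j+1)) = ∅) →
      (j ≤ l₁ →
        CZerosLE (fun z => (c : ℂ) * linForm S1.μ S1.e m₁ j A z +
            (d : ℂ) * linForm S1.μ S1.e m₁ j A' z)
          (cpx (Set.Icc u v)) (tailSum m₁ n1 j)) ∧
      (l₁ < j →
        CZerosLT (fun z => (c : ℂ) * linForm S1.μ S1.e m₁ j A z +
            (d : ℂ) * linForm S1.μ S1.e m₁ j A' z)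
          (cpx (Set.Icc u v)) (tailSum m₁ n1 j)) := by
  intro u v huv
  obtain ⟨z, -, hz⟩ := hne
  rw [linForm_combination] at hz
  exact combination_zero_bound_general S1 h1l.almostDecr
    (fun k hk => (hA.1 k hk).trans_le (by exact_mod_cast le_bump l₁ n1 k)) hA'.1
    (exists_ne_zero_of_linForm_ne_zero hz) (S1.disjoint_interval huv)

end
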